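/- Let σ : ℝ → ℝ be expressive, let (f_n) be a sequence of Boolean functions f_n : {±1}^n → {±1}, and let ε > 0, N = n^{1+ε}. If INAL(f_n, σ) = O(n^{-c}) for some c, then CP(orb(f̄_n), U^N) = O(n^{-(ε/(1+ε))·(c-1)}), where f̄_n is the N-extension of f_n and orb(f̄_n) is the uniform distribution on its orbit under coordinate permutations. -/

import Mathlib

open MeasureTheory ProbabilityTheory Filter Finset Asymptotics
open scoped NNReal ENNReal

noncomputable section

/-- The ±1 value encoded by a Boolean bit. -/
def bsign (b : Bool) : ℝ := if b then 1 else -1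

/-- Expectation over a uniformly random point of the Boolean cube `{±1}^n`. -/
def bExp (n : ℕ) (g : (Fin n → Bool) → ℝ) : ℝ :=
  (∑ x : Fin n → Bool, g x) / 2 ^ n

/-- A function on the Boolean cube is Boolean(-valued) if it takes values in `{±1}`. -/
def IsBooleanFn {n : ℕ} (f : (Fin n → Bool) → ℝ) : Prop := ∀ x, f x = 1 ∨ f x = -1

/-- Initialization distribution: the weights `w : ℝⁿ` and the bias `b` are
iid `N(0, 1/n)` Gaussians. -/
def initMeasure (n : ℕ) : Measure ((Fin n → ℝ) × ℝ) :=
  (Measure.pi fun _ : Fin n => gaussianReal 0 (n : ℝ≥0)⁻¹).prod (gaussianReal 0 (n : ℝ≥0)⁻¹)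

/-- Initial alignment `INAL(f, σ) = E_{w,b} [ (E_x [f(x) σ(wᵀx + b)])² ]`. -/
def INAL (n : ℕ) (f : (Fin n → Bool) → ℝ) (σ : ℝ → ℝ) : ℝ :=
  ∫ θ : (Fin n → ℝ) × ℝ,
    (bExp n fun x => f x * σ (∑ i, θ.1 i * bsign (x i) + θ.2)) ^ 2 ∂ initMeasure n

/-- The `v`-Gaussian smoothing `Σ_v(t) = E_{Y ∼ N(0,v)} [σ(Y + t)]`. -/
def gsmooth (σ : ℝ → ℝ) (v : ℝ) (t : ℝ) : ℝ :=
  ∫ y, σ (y + t) ∂ gaussianReal 0 v.toNNReal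

/-- `σ` is polynomially bounded: `|σ(x)| ≤ C |x|^c + C` for some `C, c > 0`. -/
def PolyBounded (σ : ℝ → ℝ) : Prop :=
  ∃ C : ℝ, 0 < C ∧ ∃ c : ℕ, 0 < c ∧ ∀ x : ℝ, |σ x| ≤ C * |x| ^ c + C

/-- `σ` is expressive: measurable, polynomially bounded, and its Gaussian smoothing has no
two consecutive vanishing derivatives at `0`. -/
def Expressive (σ : ℝ → ℝ) : Prop :=
  Measurable σ ∧ PolyBounded σ ∧
    ∀ m : ℕ, iteratedDeriv m (gsmooth σ 1) 0 ≠ 0 ∨ iteratedDeriv (m + 1) (gsmooth σ 1) 0 ≠ 0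

/-- A nonnegative sequence is negligible if it decays faster than any inverse polynomial. -/
def Negligible (g : ℕ → ℝ) : Prop :=
  ∀ c : ℕ, Tendsto (fun n : ℕ => (n : ℝ) ^ c * g n) atTop (nhds 0)

/-- Fourier character `M_S(x) = ∏_{i ∈ S} x_i`. -/
def chi {n : ℕ} (S : Finset (Fin n)) (x : Fin n → Bool) : ℝ := ∏ i ∈ S, bsign (x i)

/-- Fourier coefficient `f̂(S) = E_x [f(x) M_S(x)]`. -/
def fourierCoef (n : ℕ) (f : (Fin n → Bool) → ℝ) (S : Finset (Fin n)) : ℝ :=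
  bExp n fun x => f x * chi S x

/-- Fourier weight up to degree `k`: `W^{≤k}(f)`. -/
def weightLE (n k : ℕ) (f : (Fin n → Bool) → ℝ) : ℝ :=
  ∑ S ∈ Finset.univ.filter (fun S : Finset (Fin n) => S.card ≤ k), fourierCoef n f S ^ 2

/-- Fourier weight strictly below degree `k`: `W^{<k}(f)`. -/
def weightLT (n k : ℕ) (f : (Fin n → Bool) → ℝ) : ℝ :=
  ∑ S ∈ Finset.univ.filter (fun S : Finset (Fin n) => S.card < k), fourierCoef n f S ^ 2

/-- The monomial `M_k(x) = ∏_{i=1}^k x_i`, viewed as a function on `{±1}^n`. -/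
def monomial (n k : ℕ) : (Fin n → Bool) → ℝ :=
  fun x => ∏ i ∈ Finset.univ.filter (fun i : Fin n => (i : ℕ) < k), bsign (x i)

/-- The `N`-extension of `f : {±1}^n → ℝ` (for `n ≤ N`): ignore the last `N - n` coordinates. -/
def extendFn (n N : ℕ) (f : (Fin n → Bool) → ℝ) : (Fin N → Bool) → ℝ :=
  fun x => f fun i => if h : (i : ℕ) < N then x ⟨i, h⟩ else false

/-- Cross-predictability of (the uniform distribution on) the orbit of `f` under coordinate
permutations, with uniform inputs: `CP(orb(f), U^N)`. -/
def orbitCP (N : ℕ) (f : (Fin N → Bool) → ℝ) : ℝ :=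
  (∑ π : Equiv.Perm (Fin N), ∑ π' : Equiv.Perm (Fin N),
      (bExp N fun x => f (fun i => x (π i)) * f (fun i => x (π' i))) ^ 2) /
    (Fintype.card (Equiv.Perm (Fin N))) ^ 2

/-- `N = n^{1+ε}` (rounded up). -/
def Ndim (ε : ℝ) (n : ℕ) : ℕ := ⌈(n : ℝ) ^ (1 + ε)⌉₊

lemma bsign_mul_self (b : Bool) : bsign b * bsign b = 1 := by cases b <;> simp [bsign]

lemma sum_cube_prod {n : ℕ} (g : Fin n → Bool → ℝ) :
    ∑ x : Fin n → Bool, ∏ i, g i (x i) = ∏ i, ∑ b, g i b := by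
  rw [Finset.prod_univ_sum, Fintype.piFinset_univ]

lemma chi_eq {n : ℕ} (S : Finset (Fin n)) (x : Fin n → Bool) :
    chi S x = ∏ i, if i ∈ S then bsign (x i) else 1 := by
  simp [chi, Finset.prod_ite_mem]

lemma chi_orth {n : ℕ} (S T : Finset (Fin n)) :
    bExp n (fun x => chi S x * chi T x) = if S = T then 1 else 0 := by
  unfold bExp
  have h : ∀ x : Fin n → Bool, chi S x * chi T x
      = ∏ i, ((if i ∈ S then bsign (x i) else 1) * (if i ∈ T then bsign (x i) else 1)) := by
    intro x; rw [chi_eq, chi_eq, Finset.prod_mul_distrib]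
  simp_rw [h]
  rw [sum_cube_prod (fun i b => ((if i ∈ S then bsign b else 1) * (if i ∈ T then bsign b else 1)))]
  split_ifs with hST
  · subst hST
    have : ∀ i : Fin n, (∑ b, ((if i ∈ S then bsign b else 1) * (if i ∈ S then bsign b else 1))) = (2:ℝ) := by
      intro i
      by_cases hi : i ∈ S <;> simp [hi, bsign] <;> norm_num
    simp only [this]
    simp
  · obtain ⟨i, hi⟩ : ∃ i, ¬ (i ∈ S ↔ i ∈ T) := by
      by_contra hcon; push Not at hcon; exact hST (Finset.ext hcon)
    rw [Finset.prod_eq_zero (Finset.mem_univ i), zero_div]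
    by_cases h1 : i ∈ S <;> by_cases h2 : i ∈ T <;> simp [h1, h2, bsign] at hi ⊢

lemma chi_kernel {n : ℕ} (x y : Fin n → Bool) :
    ∑ S : Finset (Fin n), chi S x * chi S y = if x = y then 2 ^ n else 0 := by
  have h : ∏ i, (1 + bsign (x i) * bsign (y i)) = ∑ S : Finset (Fin n), chi S x * chi S y := by
    rw [Finset.prod_one_add]
    simp [chi, Finset.prod_mul_distrib]
  rw [← h]
  split_ifs with hxy
  · subst hxy; simp [bsign_mul_self]; norm_num
  · obtain ⟨i, hi⟩ := Function.ne_iff.mp hxy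
    apply Finset.prod_eq_zero (Finset.mem_univ i)
    cases h1 : x i <;> cases h2 : y i <;> simp [h1, h2, bsign] at hi ⊢

lemma fourier_inv {n : ℕ} (f : (Fin n → Bool) → ℝ) (x : Fin n → Bool) :
    f x = ∑ S, fourierCoef n f S * chi S x := by
  have : ∑ S, fourierCoef n f S * chi S x
      = (∑ y, f y * ∑ S : Finset (Fin n), chi S y * chi S x) / 2 ^ n := by
    simp_rw [fourierCoef, bExp, Finset.mul_sum, div_mul_eq_mul_div, Finset.sum_mul]
    rw [← Finset.sum_div, Finset.sum_comm]
    simp_rw [mul_assoc]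
  rw [this]
  simp_rw [chi_kernel]
  simp

lemma chi_comp {n N : ℕ} (a : Fin n ↪ Fin N) (S : Finset (Fin n)) (x : Fin N → Bool) :
    chi S (fun i => x (a i)) = chi (S.map a) x := by
  simp [chi]

lemma inner_expand {n N : ℕ} (f : (Fin n → Bool) → ℝ) (a a' : Fin n ↪ Fin N) :
    bExp N (fun x => f (fun i => x (a i)) * f (fun i => x (a' i)))
      = ∑ S, ∑ S', fourierCoef n f S * fourierCoef n f S' * if S.map a = S'.map a' then 1 else 0 := by
  have h : ∀ x : Fin N → Bool, f (fun i => x (a i)) * f (fun i => x (a' i))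
     = ∑ S, ∑ S', fourierCoef n f S * fourierCoef n f S' * (chi (S.map a) x * chi (S'.map a') x) := by
    intro x
    rw [fourier_inv f (fun i => x (a i)), fourier_inv f (fun i => x (a' i)), Finset.sum_mul_sum]
    simp_rw [chi_comp]
    refine Finset.sum_congr rfl fun S _ => Finset.sum_congr rfl fun S' _ => by ring
  simp_rw [h, ← chi_orth, bExp, ]
  rw [Finset.sum_comm, Finset.sum_div]
  refine Finset.sum_congr rfl fun S _ => ?_
  rw [Finset.sum_comm, Finset.sum_div]
  refine Finset.sum_congr rfl fun S' _ => ?_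
  rw [← Finset.mul_sum, mul_div_assoc]

lemma parseval {n : ℕ} (f : (Fin n → Bool) → ℝ) (hf : IsBooleanFn f) :
    ∑ S, fourierCoef n f S ^ 2 = 1 := by
  have h := inner_expand f (Function.Embedding.refl _) (Function.Embedding.refl _)
  have h2 : ∀ x, f x * f x = 1 := fun x => by rcases hf x with h | h <;> simp [h]
  simp [bExp, h2] at h
  rw [h]
  simp [pow_two]

lemma inner_sq_le {n N : ℕ} (f : (Fin n → Bool) → ℝ) (hf : IsBooleanFn f) (a a' : Fin n ↪ Fin N) :
    (bExp N (fun x => f (fun i => x (a i)) * f (fun i => x (a' i)))) ^ 2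
      ≤ ∑ S, fourierCoef n f S ^ 2 * if S.map a ⊆ univ.map a' then 1 else 0 := by
  rw [inner_expand]
  set F := fourierCoef n f
  have e1 : ∑ S, ∑ S', F S * F S' * (if S.map a = S'.map a' then 1 else 0)
      = ∑ S', F S' * ∑ S, F S * (if S.map a = S'.map a' then 1 else 0) := by
    rw [Finset.sum_comm]
    refine Finset.sum_congr rfl fun S' _ => ?_
    rw [Finset.mul_sum]
    refine Finset.sum_congr rfl fun S _ => by ring
  rw [e1]
  refine (Finset.sum_mul_sq_le_sq_mul_sq _ _ _).trans ?_
  rw [parseval f hf, one_mul]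
  have e2 : ∀ S' : Finset (Fin n), (∑ S, F S * (if S.map a = S'.map a' then 1 else 0)) ^ 2
      ≤ ∑ S, F S ^ 2 * (if S.map a = S'.map a' then 1 else 0) := by
    intro S'
    by_cases h : ∃ S : Finset (Fin n), S.map a = S'.map a'
    · obtain ⟨S0, h0⟩ := h
      have : ∀ S : Finset (Fin n), S.map a = S'.map a' ↔ S = S0 := by
        intro S; rw [← h0]; exact Finset.map_inj
      simp [this]
    · push Not at h
      simp [h]
  refine (Finset.sum_le_sum fun S' _ => e2 S').trans ?_
  rw [Finset.sum_comm]
  refine Finset.sum_le_sum fun S _ => ?_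
  rw [← Finset.mul_sum]
  refine mul_le_mul_of_nonneg_left ?_ (sq_nonneg _)
  by_cases h : ∃ S' : Finset (Fin n), S.map a = S'.map a'
  · obtain ⟨S0, h0⟩ := h
    have : ∀ S' : Finset (Fin n), S.map a = S'.map a' ↔ S' = S0 := by
      intro S'; rw [h0]; rw [Finset.map_inj]; exact eq_comm
    have h3 : S.map a ⊆ univ.map a' := by
      rw [h0]; exact Finset.map_subset_map.mpr (Finset.subset_univ _)
    simp only [this, h3]
    simp
  · push Not at h
    simp only [h]
    simp
    split_ifs <;> norm_num

def cperm {N : ℕ} (T V : Finset (Fin N)) : ℕ :=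
  #(univ.filter fun p : Equiv.Perm (Fin N) => ∀ i ∈ T, p i ∈ V)

lemma cperm_swap {N : ℕ} (T V : Finset (Fin N)) (t u : Fin N) (ht : t ∉ T) (hu : u ∉ T) :
    cperm (insert u T) V = cperm (insert t T) V := by
  unfold cperm
  refine Finset.card_equiv (Equiv.mulRight (Equiv.swap t u)) ?_
  intro p
  simp only [Finset.mem_filter, Finset.mem_univ, true_and, Finset.forall_mem_insert,
    Equiv.coe_mulRight, Equiv.Perm.mul_apply, Equiv.swap_apply_left]
  have : ∀ i ∈ T, Equiv.swap t u i = i := fun i hi =>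
    Equiv.swap_apply_of_ne_of_ne (fun h => ht (h ▸ hi)) (fun h => hu (h ▸ hi))
  refine and_congr Iff.rfl (forall₂_congr fun i hi => ?_)
  rw [this i hi]

lemma cperm_step {N : ℕ} (T V : Finset (Fin N)) (t : Fin N) (ht : t ∉ T) :
    (N - #T) * cperm (insert t T) V = cperm T V * (#V - #T) := by
  have h1 : ∑ u ∈ univ \ T, cperm (insert u T) V = (N - #T) * cperm (insert t T) V := by
    rw [Finset.sum_congr rfl (fun u hu => cperm_swap T V t u ht (by simpa using hu))]
    rw [Finset.sum_const, Finset.card_sdiff_of_subset (Finset.subset_univ _)]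
    simp
  rw [← h1]
  unfold cperm
  simp_rw [Finset.card_filter]
  rw [Finset.sum_comm, Finset.sum_mul]
  refine Finset.sum_congr rfl fun p _ => ?_
  by_cases h : ∀ i ∈ T, p i ∈ V
  · rw [if_pos h, one_mul]
    simp only [Finset.forall_mem_insert, and_iff_left h]
    rw [← Finset.card_filter]
    have : T.map p.toEmbedding ⊆ V := by
      intro x hx; simp only [Finset.mem_map, Equiv.coe_toEmbedding] at hx
      obtain ⟨i, hi, rfl⟩ := hx; exact h i hi
    have e : #(V \ T.map p.toEmbedding) = #V - #T := by
      rw [Finset.card_sdiff_of_subset this, Finset.card_map]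
    rw [← e]
    refine Finset.card_equiv p ?_
    intro i
    simp [and_comm]
  · simp [h]

lemma cperm_le {N : ℕ} (T V : Finset (Fin N)) :
    (cperm T V : ℝ) ≤ (Fintype.card (Equiv.Perm (Fin N))) * ((#V : ℝ) / N) ^ #T := by
  induction T using Finset.induction_on with
  | empty => simp [cperm, Finset.card_univ]
  | insert t T ht ih =>
    have hs := cperm_step T V t ht
    have hTN : #T < N := by
      have h := Finset.card_le_univ (insert t T)
      rw [Finset.card_insert_of_notMem ht] at h
      simpa using h
    have hVN : #V ≤ N := by simpa using Finset.card_le_univ V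
    have hN : (0:ℝ) < N := by exact_mod_cast (by omega : 0 < N)
    have key : (cperm (insert t T) V : ℝ) ≤ cperm T V * ((#V : ℝ) / N) := by
      by_cases hv : #T ≤ #V
      · have hs' : ((N:ℝ) - #T) * cperm (insert t T) V = cperm T V * ((#V:ℝ) - #T) := by
          have := congrArg (Nat.cast (R := ℝ)) hs
          push_cast [Nat.cast_sub hTN.le, Nat.cast_sub hv] at this
          exact this
        have hpos : (0:ℝ) < N - #T := by
          have : (#T : ℝ) < N := by exact_mod_cast hTN
          linarith
        have h2 : ((#V:ℝ) - #T) ≤ (N - #T) * ((#V : ℝ) / N) := by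
          have h3 : (#V : ℝ) / N ≤ 1 := by
            rw [div_le_one hN]; exact_mod_cast hVN
          have h4 : (N:ℝ) * ((#V : ℝ) / N) = #V := by field_simp
          nlinarith [Nat.cast_nonneg (α := ℝ) (#T)]
        have : ((N:ℝ) - #T) * cperm (insert t T) V ≤ (N - #T) * (cperm T V * ((#V : ℝ) / N)) := by
          rw [hs']
          calc (cperm T V : ℝ) * ((#V:ℝ) - #T) ≤ cperm T V * ((N - #T) * ((#V : ℝ) / N)) :=
                mul_le_mul_of_nonneg_left h2 (Nat.cast_nonneg _)
            _ = _ := by ring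
        exact le_of_mul_le_mul_left this hpos
      · have : (N - #T) * cperm (insert t T) V = 0 := by
          rw [hs, Nat.sub_eq_zero_of_le (by omega), mul_zero]
        have : cperm (insert t T) V = 0 := by
          rcases Nat.mul_eq_zero.mp this with h | h
          · omega
          · exact h
        rw [this]; simp; positivity
    rw [Finset.card_insert_of_notMem ht, pow_succ]
    calc (cperm (insert t T) V : ℝ) ≤ cperm T V * ((#V : ℝ) / N) := key
      _ ≤ _ := by
        rw [← mul_assoc]
        exact mul_le_mul_of_nonneg_right ih (by positivity)

lemma orbitCP_le {n N : ℕ} (hnN : n ≤ N) (f : (Fin n → Bool) → ℝ) (hf : IsBooleanFn f) :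
    orbitCP N (extendFn n N f) ≤ ∑ S, fourierCoef n f S ^ 2 * ((n : ℝ) / N) ^ #S := by
  set ι : Fin n ↪ Fin N := Fin.castLEEmb hnN
  have hext : ∀ x : Fin N → Bool, extendFn n N f x = f (fun i => x (ι i)) := by
    intro x; unfold extendFn; congr 1; funext i
    rw [dif_pos (lt_of_lt_of_le i.2 hnN)]; rfl
  unfold orbitCP
  have hc : (0:ℝ) < (Fintype.card (Equiv.Perm (Fin N)) : ℝ) := by exact_mod_cast Fintype.card_pos
  rw [div_le_iff₀ (by positivity)]
  set M := (Fintype.card (Equiv.Perm (Fin N)) : ℝ)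
  have step : ∀ p p' : Equiv.Perm (Fin N),
      (bExp N fun x => extendFn n N f (fun i => x (p i)) * extendFn n N f (fun i => x (p' i))) ^ 2
      ≤ ∑ S, fourierCoef n f S ^ 2 * if ∀ i ∈ S.map (ι.trans p.toEmbedding), p'⁻¹ i ∈ univ.map ι then 1 else 0 := by
    intro p p'
    simp_rw [hext]
    refine (inner_sq_le f hf (ι.trans p.toEmbedding) (ι.trans p'.toEmbedding)).trans ?_
    refine Finset.sum_le_sum fun S _ => mul_le_mul_of_nonneg_left ?_ (sq_nonneg _)
    have : (S.map (ι.trans p.toEmbedding) ⊆ univ.map (ι.trans p'.toEmbedding)) →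
      ∀ i ∈ S.map (ι.trans p.toEmbedding), p'⁻¹ i ∈ univ.map ι := by
      intro h i hi
      have := h hi
      simp only [Finset.mem_map, Finset.mem_univ, true_and] at this ⊢
      obtain ⟨j, rfl⟩ := this
      exact ⟨j, by simp⟩
    split_ifs with h1 h2 h2
    · exact le_rfl
    · exact absurd (this h1) h2
    · norm_num
    · norm_num
  calc _ ≤ ∑ p : Equiv.Perm (Fin N), ∑ p' : Equiv.Perm (Fin N), ∑ S, fourierCoef n f S ^ 2 *
          (if ∀ i ∈ S.map (ι.trans p.toEmbedding), p'⁻¹ i ∈ univ.map ι then (1:ℝ) else 0) :=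
        Finset.sum_le_sum fun p _ => Finset.sum_le_sum fun p' _ => step p p'
    _ = ∑ p : Equiv.Perm (Fin N), ∑ S, fourierCoef n f S ^ 2 * cperm (S.map (ι.trans p.toEmbedding)) (univ.map ι) := by
        refine Finset.sum_congr rfl fun p _ => ?_
        rw [Finset.sum_comm]
        refine Finset.sum_congr rfl fun S _ => ?_
        rw [← Finset.mul_sum]
        congr 1
        rw [cperm, Finset.card_filter]
        push_cast
        exact Equiv.sum_comp (Equiv.inv (Equiv.Perm (Fin N))) (fun p' => if ∀ i ∈ S.map (ι.trans p.toEmbedding), p' i ∈ univ.map ι then (1:ℝ) else 0)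
    _ ≤ ∑ p : Equiv.Perm (Fin N), ∑ S, fourierCoef n f S ^ 2 * (M * ((n:ℝ) / N) ^ #S) := by
        refine Finset.sum_le_sum fun p _ => Finset.sum_le_sum fun S _ => mul_le_mul_of_nonneg_left ?_ (sq_nonneg _)
        have := cperm_le (S.map (ι.trans p.toEmbedding)) (univ.map ι)
        simpa using this
    _ = _ := by
        rw [Finset.sum_const, Finset.card_univ, nsmul_eq_mul, Finset.sum_mul, Finset.mul_sum]
        refine Finset.sum_congr rfl fun S _ => ?_
        simp only [M]
        ring
lemma polyBounded_exp {σ : ℝ → ℝ} (h : PolyBounded σ) :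
    ∃ A : ℝ, 0 < A ∧ ∀ x, |σ x| ≤ A * Real.exp |x| := by
  obtain ⟨C, hC, c, -, hb⟩ := h
  refine ⟨C * c.factorial + C, by positivity, fun x => (hb x).trans ?_⟩
  have h1 := Real.pow_div_factorial_le_exp |x| (abs_nonneg x) c
  rw [div_le_iff₀ (by positivity)] at h1
  have h2 : 1 ≤ Real.exp |x| := Real.one_le_exp (abs_nonneg x)
  nlinarith [mul_le_mul_of_nonneg_left h1 hC.le, mul_le_mul_of_nonneg_left h2 hC.le]

lemma integrable_exp_abs (s : ℝ≥0) (a : ℝ) :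
    Integrable (fun u => Real.exp (a * |u|)) (gaussianReal 0 s) :=
  integrable_exp_mul_abs (X := fun u => u) (integrable_exp_mul_gaussianReal a) (integrable_exp_mul_gaussianReal (-a))

lemma hasDerivAt_pdf (s : ℝ≥0) (x t : ℝ) :
    HasDerivAt (fun t => gaussianPDFReal t s x) (gaussianPDFReal t s x * ((x - t) / s)) t := by
  unfold gaussianPDFReal
  have h : HasDerivAt (fun t : ℝ => -(x - t) ^ 2 / (2 * s)) ((x - t) / s) t := by
    have h1 := ((((hasDerivAt_id t).const_sub x).pow 2).neg).div_const (2 * (s : ℝ))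
    convert! h1 using 1
    simp only [id]
    by_cases hs : (s : ℝ) = 0
    · simp [hs]
    · field_simp
      simp
      ring
  have := (h.exp).const_mul ((Real.sqrt (2 * Real.pi * s))⁻¹)
  convert! this using 1
  ring

lemma gauss_shift (φ : ℝ → ℝ) (hm : Measurable φ) (s : ℝ≥0) (hs : s ≠ 0) (t : ℝ) :
    ∫ u, φ (u + t) ∂gaussianReal 0 s = ∫ x, gaussianPDFReal t s x * φ x := by
  have : ∫ x, φ x ∂(gaussianReal t s) = ∫ u, φ (u + t) ∂gaussianReal 0 s := by
    have h := gaussianReal_map_add_const (μ := 0) (v := s) t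
    rw [zero_add] at h
    rw [← h, integral_map (by fun_prop) hm.aestronglyMeasurable]
  rw [← this, integral_gaussianReal_eq_integral_smul hs]
  simp

lemma hasDerivAt_gauss0 (φ : ℝ → ℝ) (hm : Measurable φ) (A : ℝ) (hA0 : 0 ≤ A)
    (hA : ∀ u, |φ u| ≤ A * Real.exp |u|) (s : ℝ≥0) (hs : s ≠ 0) :
    HasDerivAt (fun t => ∫ u, φ (u + t) ∂gaussianReal 0 s)
      ((s : ℝ)⁻¹ * ∫ u, u * φ u ∂gaussianReal 0 s) 0 := by
  have hs' : (0 : ℝ) < s := by positivity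
  simp_rw [gauss_shift φ hm s hs]
  have e2 : (s : ℝ)⁻¹ * ∫ u, u * φ u ∂gaussianReal 0 s
      = ∫ x, gaussianPDFReal 0 s x * ((x - 0) / s) * φ x := by
    rw [integral_gaussianReal_eq_integral_smul hs, ← integral_const_mul]
    congr 1; funext x; simp; ring
  rw [e2]
  set K : ℝ := (Real.sqrt (2 * Real.pi * s))⁻¹ with hK
  have hK0 : 0 ≤ K := by positivity
  -- pdf bound
  have hpdf : ∀ t ∈ Metric.ball (0:ℝ) 1, ∀ x, gaussianPDFReal t s x
      ≤ K * Real.exp (1 / (2 * s)) * Real.exp (-(1 / (4 * s)) * x ^ 2) := by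
    intro t ht x
    rw [Metric.mem_ball, dist_zero_right, Real.norm_eq_abs] at ht
    unfold gaussianPDFReal
    rw [mul_assoc K, ← Real.exp_add]
    refine mul_le_mul_of_nonneg_left (Real.exp_le_exp.mpr ?_) hK0
    have ht2 : t ^ 2 ≤ 1 := by
      rw [← sq_abs]; nlinarith [abs_nonneg t]
    have : x ^ 2 / 2 - 1 ≤ (x - t) ^ 2 := by nlinarith [sq_nonneg (x - 2 * t)]
    rw [show 1 / (2 * (s:ℝ)) + -(1 / (4 * s)) * x ^ 2 = (-(x ^ 2 / 2 - 1)) / (2 * s) by field_simp; ring]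
    gcongr
  have hexp : ∀ x : ℝ, Real.exp |x| * Real.exp |x| * Real.exp (-(1 / (4 * s)) * x ^ 2)
      ≤ Real.exp (8 * s) * Real.exp (-(1 / (8 * s)) * x ^ 2) := by
    intro x
    rw [← Real.exp_add, ← Real.exp_add, ← Real.exp_add]
    refine Real.exp_le_exp.mpr ?_
    have h1 : 0 ≤ (|x| - 8 * s) ^ 2 / (8 * s) := by positivity
    have h2 : (|x| - 8 * s) ^ 2 / (8 * s) = 1 / (8 * s) * x ^ 2 - 2 * |x| + 8 * s := by
      rw [← sq_abs x]; field_simp; ring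
    have h3 : -(1 / (4 * (s:ℝ))) * x ^ 2 = - (1 / (8 * s) * x ^ 2) - (1 / (8 * s) * x ^ 2) := by
      field_simp; ring
    rw [h3]; linarith
  have hint : Integrable (fun x : ℝ => Real.exp (-(1 / (8 * (s:ℝ))) * x ^ 2)) :=
    integrable_exp_neg_mul_sq (by positivity)
  set D : ℝ := K * Real.exp (1 / (2 * s)) * A * (Real.exp 1 / s) * Real.exp (8 * s) with hD
  set D0 : ℝ := K * Real.exp (1 / (2 * s)) * A * Real.exp (8 * s) with hD0
  refine (hasDerivAt_integral_of_dominated_loc_of_deriv_le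
    (F' := fun t x => gaussianPDFReal t s x * ((x - t) / s) * φ x)
    (bound := fun x => D * Real.exp (-(1 / (8 * (s:ℝ))) * x ^ 2))
    (Metric.ball_mem_nhds (0:ℝ) one_pos) ?_ ?_ ?_ ?_ ?_ ?_).2
  · exact Filter.Eventually.of_forall fun t =>
      ((measurable_gaussianPDFReal t s).mul hm).aestronglyMeasurable
  · refine (hint.const_mul D0).mono' ((measurable_gaussianPDFReal 0 s).mul hm).aestronglyMeasurable ?_
    refine Filter.Eventually.of_forall fun x => ?_
    rw [norm_mul, Real.norm_eq_abs, Real.norm_eq_abs, abs_of_nonneg (gaussianPDFReal_nonneg _ _ _)]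
    calc gaussianPDFReal 0 s x * |φ x| ≤ (K * Real.exp (1 / (2 * s)) * Real.exp (-(1 / (4 * s)) * x ^ 2)) * (A * Real.exp |x|) := by
          gcongr
          · exact hpdf 0 (by simp) x
          · exact hA x
      _ = (K * Real.exp (1 / (2 * s)) * A) * (1 * Real.exp |x| * Real.exp (-(1 / (4 * s)) * x ^ 2)) := by ring
      _ ≤ (K * Real.exp (1 / (2 * s)) * A) * (Real.exp |x| * Real.exp |x| * Real.exp (-(1 / (4 * s)) * x ^ 2)) := by
          gcongr; exact Real.one_le_exp (abs_nonneg x)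
      _ ≤ (K * Real.exp (1 / (2 * s)) * A) * (Real.exp (8 * s) * Real.exp (-(1 / (8 * s)) * x ^ 2)) := by
          gcongr _ * ?_; exact hexp x
      _ = _ := by rw [hD0]; ring
  · exact (((measurable_gaussianPDFReal 0 s).mul (by fun_prop)).mul hm).aestronglyMeasurable
  · refine Filter.Eventually.of_forall fun x t ht => ?_
    rw [norm_mul, norm_mul, Real.norm_eq_abs, Real.norm_eq_abs, Real.norm_eq_abs, abs_of_nonneg (gaussianPDFReal_nonneg _ _ _),
      abs_div, abs_of_pos hs']
    have hxt : |x - t| ≤ Real.exp 1 * Real.exp |x| := by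
      rw [Metric.mem_ball, dist_zero_right, Real.norm_eq_abs] at ht
      rw [← Real.exp_add]
      have := Real.add_one_le_exp (1 + |x|)
      have := abs_sub x t
      linarith
    calc gaussianPDFReal t s x * (|x - t| / s) * |φ x| ≤ (K * Real.exp (1 / (2 * s)) * Real.exp (-(1 / (4 * s)) * x ^ 2)) * ((Real.exp 1 * Real.exp |x|) / s) * (A * Real.exp |x|) := by
          gcongr
          · exact hpdf t ht x
          · exact hA x
      _ = (K * Real.exp (1 / (2 * s)) * A * (Real.exp 1 / s)) * (Real.exp |x| * Real.exp |x| * Real.exp (-(1 / (4 * s)) * x ^ 2)) := by ring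
      _ ≤ (K * Real.exp (1 / (2 * s)) * A * (Real.exp 1 / s)) * (Real.exp (8 * s) * Real.exp (-(1 / (8 * s)) * x ^ 2)) := by
          gcongr _ * ?_; exact hexp x
      _ = _ := by rw [hD]; ring
  · exact hint.const_mul D
  · exact Filter.Eventually.of_forall fun x t _ => (hasDerivAt_pdf s x t).mul_const (φ x)

lemma hasDerivAt_gauss (φ : ℝ → ℝ) (hm : Measurable φ) (A : ℝ) (hA0 : 0 ≤ A)
    (hA : ∀ u, |φ u| ≤ A * Real.exp |u|) (s : ℝ≥0) (hs : s ≠ 0) (t : ℝ) :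
    HasDerivAt (fun t => ∫ u, φ (u + t) ∂gaussianReal 0 s)
      ((s : ℝ)⁻¹ * ∫ u, u * φ (u + t) ∂gaussianReal 0 s) t := by
  have h := hasDerivAt_gauss0 (fun u => φ (u + t)) (hm.comp (measurable_id.add_const t))
    (A * Real.exp |t|) (by positivity) (fun u => by
      refine (hA _).trans ?_
      rw [mul_assoc, ← Real.exp_add]
      refine mul_le_mul_of_nonneg_left (Real.exp_le_exp.mpr ?_) hA0
      linarith [abs_add_le u t]) s hs
  have h2 : HasDerivAt (fun r : ℝ => r - t) 1 t := (hasDerivAt_id t).sub_const t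
  have h3 := HasDerivAt.comp t (by simpa using h) h2
  rw [mul_one] at h3
  convert! h3 using 1
  funext r
  simp [Function.comp, add_assoc]
/-- law of the weights -/
abbrev wlaw (n : ℕ) (s : ℝ≥0) : Measure (Fin n → ℝ) := Measure.pi fun _ : Fin n => gaussianReal 0 s

/-- monomial in the weights -/
def wmon {n : ℕ} (S : Finset (Fin n)) (w : Fin n → ℝ) : ℝ := ∏ i, if i ∈ S then w i else 1

lemma measurable_wmon {n : ℕ} (S : Finset (Fin n)) : Measurable (wmon S) := by
  unfold wmon
  refine Finset.measurable_fun_prod _ fun i _ => ?_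
  split_ifs
  · exact measurable_pi_apply i
  · exact measurable_const

lemma abs_wmon_le {n : ℕ} (S : Finset (Fin n)) (w : Fin n → ℝ) :
    |wmon S w| ≤ ∏ i, Real.exp |w i| := by
  unfold wmon
  rw [Finset.abs_prod]
  refine Finset.prod_le_prod (fun i _ => abs_nonneg _) fun i _ => ?_
  split_ifs
  · linarith [Real.add_one_le_exp |w i|]
  · simpa using abs_nonneg (w i)

lemma abs_sig_le {σ : ℝ → ℝ} {A : ℝ} (hA0 : 0 ≤ A) (hA : ∀ u, |σ u| ≤ A * Real.exp |u|) {n : ℕ}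
    (w : Fin n → ℝ) (r : ℝ) :
    |σ (∑ i, w i + r)| ≤ A * (Real.exp |r| * ∏ i, Real.exp |w i|) := by
  refine (hA _).trans (mul_le_mul_of_nonneg_left ?_ hA0)
  rw [← Real.exp_sum, ← Real.exp_add]
  refine Real.exp_le_exp.mpr ?_
  linarith [abs_add_le (∑ i, w i) r, Finset.abs_sum_le_sum_abs w univ]

lemma integrable_prod_exp (n : ℕ) (s : ℝ≥0) (a : ℝ) :
    Integrable (fun w : Fin n → ℝ => ∏ i, Real.exp (a * |w i|)) (wlaw n s) :=
  Integrable.fintype_prod (fun _ => integrable_exp_abs s a)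

lemma prod_exp_mul {n : ℕ} (w : Fin n → ℝ) :
    (∏ i, Real.exp |w i|) * ∏ i, Real.exp |w i| = ∏ i, Real.exp (2 * |w i|) := by
  rw [← Finset.prod_mul_distrib]
  refine Finset.prod_congr rfl fun i _ => ?_
  rw [← Real.exp_add]; ring_nf

/-- the smoothed moment -/
def Pm (σ : ℝ → ℝ) (n : ℕ) (s : ℝ≥0) (S : Finset (Fin n)) (t : ℝ) : ℝ :=
  ∫ w, σ (∑ i, w i + t) * wmon S w ∂wlaw n s

/-- partial average after removing the coordinate j -/
def Ph (σ : ℝ → ℝ) (m : ℕ) (s : ℝ≥0) (S : Finset (Fin m)) (u : ℝ) : ℝ :=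
  ∫ w, σ (∑ i, w i + u) * wmon S w ∂wlaw m s

lemma measurable_Pm {σ : ℝ → ℝ} (hm : Measurable σ) (m : ℕ) (s : ℝ≥0) (S : Finset (Fin m)) :
    Measurable (Pm σ m s S) := by
  have h : StronglyMeasurable (Function.uncurry fun (u : ℝ) (w : Fin m → ℝ) => σ (∑ i, w i + u) * wmon S w) := by
    apply Measurable.stronglyMeasurable
    apply Measurable.mul
    · apply hm.comp; fun_prop
    · exact (measurable_wmon S).comp measurable_snd
  exact (h.integral_prod_right (ν := wlaw m s)).measurable

lemma sig_wmon_le {σ : ℝ → ℝ} {A : ℝ} (hA0 : 0 ≤ A) (hA : ∀ u, |σ u| ≤ A * Real.exp |u|) {m : ℕ}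
    (S : Finset (Fin m)) (w : Fin m → ℝ) (u : ℝ) :
    |σ (∑ i, w i + u) * wmon S w| ≤ (A * Real.exp |u|) * ∏ i, Real.exp (2 * |w i|) := by
  rw [abs_mul]
  calc _ ≤ (A * (Real.exp |u| * ∏ i, Real.exp |w i|)) * ∏ i, Real.exp |w i| :=
        mul_le_mul (abs_sig_le hA0 hA w u) (abs_wmon_le S w) (abs_nonneg _) (by positivity)
    _ = _ := by rw [← prod_exp_mul]; ring

lemma abs_Pm_le {σ : ℝ → ℝ} {A : ℝ} (hA0 : 0 ≤ A) (hA : ∀ u, |σ u| ≤ A * Real.exp |u|) (m : ℕ) (s : ℝ≥0)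
    (S : Finset (Fin m)) (u : ℝ) :
    |Pm σ m s S u| ≤ (A * ∫ w, ∏ i, Real.exp (2 * |w i|) ∂wlaw m s) * Real.exp |u| := by
  unfold Pm
  have := norm_integral_le_of_norm_le (μ := wlaw m s) (f := fun w => σ (∑ i, w i + u) * wmon S w)
    ((integrable_prod_exp m s 2).const_mul (A * Real.exp |u|))
    (Filter.Eventually.of_forall fun w => by
      rw [Real.norm_eq_abs]; exact sig_wmon_le hA0 hA S w u)
  rw [integral_const_mul, Real.norm_eq_abs] at this
  linarith

lemma Pm_split {σ : ℝ → ℝ} (hm : Measurable σ) {A : ℝ} (hA0 : 0 ≤ A) (hA : ∀ u, |σ u| ≤ A * Real.exp |u|)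
    (m : ℕ) (s : ℝ≥0) (S : Finset (Fin (m + 1))) (j : Fin (m + 1)) (t : ℝ) :
    Pm σ (m + 1) s S t = ∫ u, (if j ∈ S then u else 1) *
      Pm σ m s (univ.filter fun i => j.succAbove i ∈ S) (u + t) ∂gaussianReal 0 s := by
  set S' : Finset (Fin m) := univ.filter fun i => j.succAbove i ∈ S
  have hmp := (measurePreserving_piFinSuccAbove (fun _ : Fin (m + 1) => gaussianReal 0 s) j).symm
  have e1 : Pm σ (m + 1) s S t = ∫ z : ℝ × (Fin m → ℝ), (if j ∈ S then z.1 else 1) *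
      (σ (∑ i, z.2 i + (z.1 + t)) * wmon S' z.2) ∂((gaussianReal 0 s).prod (wlaw m s)) := by
    unfold Pm
    rw [← hmp.integral_comp']
    refine integral_congr_ae (Filter.Eventually.of_forall fun z => ?_)
    have h1 : ∑ i, (MeasurableEquiv.piFinSuccAbove (fun _ : Fin (m + 1) => ℝ) j).symm z i + t = ∑ i, z.2 i + (z.1 + t) := by
      rw [Fin.sum_univ_succAbove _ j]
      simp [MeasurableEquiv.piFinSuccAbove_symm_apply, Fin.insertNthEquiv]
      ring
    have h2 : wmon S ((MeasurableEquiv.piFinSuccAbove (fun _ : Fin (m + 1) => ℝ) j).symm z) =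
        (if j ∈ S then z.1 else 1) * wmon S' z.2 := by
      unfold wmon
      rw [Fin.prod_univ_succAbove _ j]
      simp [MeasurableEquiv.piFinSuccAbove_symm_apply, Fin.insertNthEquiv, S']
    simp only [h1, h2]
    ring
  rw [e1, integral_prod]
  · refine integral_congr_ae (Filter.Eventually.of_forall fun u => ?_)
    simp only [Pm]
    rw [integral_const_mul]
  · have hb : Integrable (fun z : ℝ × (Fin m → ℝ) => (A * Real.exp |t|) * (Real.exp (2 * |z.1|) * ∏ i, Real.exp (2 * |z.2 i|)))
        ((gaussianReal 0 s).prod (wlaw m s)) :=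
      (((integrable_exp_abs s 2).mul_prod (integrable_prod_exp m s 2))).const_mul _
    refine hb.mono' ?_ (Filter.Eventually.of_forall fun z => ?_)
    · apply Measurable.aestronglyMeasurable
      apply Measurable.mul
      · split_ifs <;> fun_prop
      apply Measurable.mul
      · apply hm.comp; fun_prop
      · exact (measurable_wmon S').comp measurable_snd
    · rw [norm_mul, Real.norm_eq_abs, Real.norm_eq_abs]
      have h1 : |if j ∈ S then z.1 else 1| ≤ Real.exp |z.1| := by
        split_ifs
        · linarith [Real.add_one_le_exp |z.1|]
        · simpa using abs_nonneg z.1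
      have h2 := sig_wmon_le hA0 hA S' z.2 (z.1 + t)
      have h3 : Real.exp |z.1 + t| ≤ Real.exp |z.1| * Real.exp |t| := by
        rw [← Real.exp_add]; exact Real.exp_le_exp.mpr (abs_add_le _ _)
      have hpos : 0 ≤ ∏ i, Real.exp (2 * |z.2 i|) := by positivity
      calc _ ≤ Real.exp |z.1| * ((A * Real.exp |z.1 + t|) * ∏ i, Real.exp (2 * |z.2 i|)) :=
            mul_le_mul h1 h2 (abs_nonneg _) (by positivity)
        _ ≤ Real.exp |z.1| * ((A * (Real.exp |z.1| * Real.exp |t|)) * ∏ i, Real.exp (2 * |z.2 i|)) := by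
            gcongr
        _ = _ := by rw [two_mul, Real.exp_add]; ring

lemma hasDerivAt_Pm {σ : ℝ → ℝ} (hm : Measurable σ) {A : ℝ} (hA0 : 0 ≤ A) (hA : ∀ u, |σ u| ≤ A * Real.exp |u|)
    (n : ℕ) (s : ℝ≥0) (hs : s ≠ 0) (S : Finset (Fin n)) (j : Fin n) (hj : j ∉ S) (t : ℝ) :
    HasDerivAt (Pm σ n s S) ((s : ℝ)⁻¹ * Pm σ n s (insert j S) t) t := by
  obtain _ | m := n
  · exact j.elim0
  have e1 : Pm σ (m + 1) s S = fun t => ∫ u, Pm σ m s (univ.filter fun i => j.succAbove i ∈ S) (u + t) ∂gaussianReal 0 s := by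
    funext t
    rw [Pm_split hm hA0 hA m s S j t]; simp [hj]
  rw [e1, Pm_split hm hA0 hA m s (insert j S) j t]
  have e2 : (univ.filter fun i => j.succAbove i ∈ insert j S) = (univ.filter fun i => j.succAbove i ∈ S) := by
    ext i; simp [Fin.succAbove_ne]
  rw [e2]
  simp only [Finset.mem_insert_self, if_true]
  refine hasDerivAt_gauss _ (measurable_Pm hm m s _) (A * ∫ w, ∏ i, Real.exp (2 * |w i|) ∂wlaw m s) ?_ (abs_Pm_le hA0 hA m s _) s hs t
  refine mul_nonneg hA0 (integral_nonneg fun w => ?_)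
  positivity

lemma wlaw_sum (n : ℕ) (s : ℝ≥0) : (wlaw n s).map (fun w => ∑ i, w i) = gaussianReal 0 (n * s) := by
  induction n with
  | zero =>
    have : (fun w : Fin 0 → ℝ => ∑ i, w i) = fun _ => 0 := by funext w; simp
    rw [this, Measure.map_const]; simp
  | succ m ih =>
    have hmp := (measurePreserving_piFinSuccAbove (fun _ : Fin (m + 1) => gaussianReal 0 s) 0).symm
    have h1 : (fun w : Fin (m+1) → ℝ => ∑ i, w i) ∘ (MeasurableEquiv.piFinSuccAbove (fun _ : Fin (m + 1) => ℝ) 0).symm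
       = (fun z : ℝ × ℝ => z.1 + z.2) ∘ (Prod.map id (fun w : Fin m → ℝ => ∑ i, w i)) := by
      funext z
      simp [Fin.sum_univ_succ, MeasurableEquiv.piFinSuccAbove_symm_apply, Fin.insertNthEquiv]
    have h0 : wlaw (m+1) s = ((gaussianReal 0 s).prod (wlaw m s)).map (MeasurableEquiv.piFinSuccAbove (fun _ : Fin (m + 1) => ℝ) 0).symm :=
      hmp.map_eq.symm
    rw [h0, Measure.map_map (by fun_prop) (MeasurableEquiv.measurable _), h1, ← Measure.map_map (by fun_prop) (by fun_prop),
      ← Measure.map_prod_map _ _ measurable_id (by fun_prop), ih, Measure.map_id]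
    have := gaussianReal_conv_gaussianReal (m₁ := 0) (m₂ := 0) (v₁ := s) (v₂ := m * s)
    rw [Measure.conv] at this
    rw [this]
    congr 1
    · simp
    · push_cast; ring

lemma iteratedDeriv_gsmooth {σ : ℝ → ℝ} (hm : Measurable σ) {A : ℝ} (hA0 : 0 ≤ A) (hA : ∀ u, |σ u| ≤ A * Real.exp |u|)
    (n : ℕ) (hn : n ≠ 0) (S : Finset (Fin n)) :
    iteratedDeriv (#S) (gsmooth σ 1) = fun t => (n : ℝ) ^ (#S) * Pm σ n (n : ℝ≥0)⁻¹ S t := by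
  have hn' : (n : ℝ≥0) ≠ 0 := by exact_mod_cast hn
  induction S using Finset.induction_on with
  | empty =>
    funext t
    simp only [Finset.card_empty, iteratedDeriv_zero, pow_zero, one_mul, gsmooth, Pm, wmon]
    have h := wlaw_sum n (n : ℝ≥0)⁻¹
    rw [mul_inv_cancel₀ hn'] at h
    rw [Real.toNNReal_one, ← h, integral_map (by fun_prop)]
    · simp
    · exact (hm.comp (measurable_id.add_const t)).aestronglyMeasurable
  | insert j S hj ih =>
    rw [Finset.card_insert_of_notMem hj, iteratedDeriv_succ, ih]
    funext t
    have h := (hasDerivAt_Pm hm hA0 hA n (n : ℝ≥0)⁻¹ (inv_ne_zero hn') S j hj t).const_mul ((n:ℝ) ^ #S)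
    rw [h.deriv]
    simp
    ring

lemma hasDerivAt_iter {σ : ℝ → ℝ} (hm : Measurable σ) {A : ℝ} (hA0 : 0 ≤ A) (hA : ∀ u, |σ u| ≤ A * Real.exp |u|)
    (k : ℕ) (t : ℝ) :
    HasDerivAt (iteratedDeriv k (gsmooth σ 1)) (iteratedDeriv (k + 1) (gsmooth σ 1) t) t := by
  rw [iteratedDeriv_succ]
  apply DifferentiableAt.hasDerivAt
  have h := iteratedDeriv_gsmooth hm hA0 hA (k + 1) (by omega) (univ.map (Fin.castSuccEmb (n := k)))
  rw [Finset.card_map, Finset.card_univ, Fintype.card_fin] at h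
  rw [h]
  have hn' : ((k + 1 : ℕ) : ℝ≥0) ≠ 0 := by exact_mod_cast (by omega : k + 1 ≠ 0)
  exact ((hasDerivAt_Pm hm hA0 hA (k+1) ((k + 1 : ℕ) : ℝ≥0)⁻¹ (inv_ne_zero hn') _ (Fin.last k) (by simp) t).const_mul _).differentiableAt
lemma bessel {Ω ι : Type*} [MeasurableSpace Ω] (μ : Measure Ω) (I : Finset ι) [DecidableEq ι] (F : Ω → ℝ)
    (e : ι → Ω → ℝ) (v : ℝ) (hv : 0 < v) (hF : Integrable (fun w => F w ^ 2) μ)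
    (hFe : ∀ i ∈ I, Integrable (fun w => F w * e i w) μ)
    (hee : ∀ i ∈ I, ∀ j ∈ I, Integrable (fun w => e i w * e j w) μ)
    (ho : ∀ i ∈ I, ∀ j ∈ I, ∫ w, e i w * e j w ∂μ = if i = j then v else 0) :
    ∑ i ∈ I, (∫ w, F w * e i w ∂μ) ^ 2 ≤ v * ∫ w, F w ^ 2 ∂μ := by
  set c : ι → ℝ := fun i => ∫ w, F w * e i w ∂μ with hc
  have h0 : 0 ≤ ∫ w, (v * F w - ∑ i ∈ I, c i * e i w) ^ 2 ∂μ := integral_nonneg fun w => sq_nonneg _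
  have hexp : ∀ w, (v * F w - ∑ i ∈ I, c i * e i w) ^ 2 =
      v ^ 2 * F w ^ 2 - 2 * v * (∑ i ∈ I, c i * (F w * e i w))
        + ∑ i ∈ I, ∑ j ∈ I, c i * c j * (e i w * e j w) := by
    intro w
    have h1 : ∑ i ∈ I, c i * (F w * e i w) = F w * ∑ i ∈ I, c i * e i w := by
      rw [Finset.mul_sum]; exact Finset.sum_congr rfl fun i _ => by ring
    have h2 : ∑ i ∈ I, ∑ j ∈ I, c i * c j * (e i w * e j w)
        = (∑ i ∈ I, c i * e i w) * ∑ i ∈ I, c i * e i w := by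
      rw [Finset.sum_mul_sum]
      exact Finset.sum_congr rfl fun i _ => Finset.sum_congr rfl fun j _ => by ring
    rw [h1, h2]; ring
  simp_rw [hexp] at h0
  have i1 : Integrable (fun w => v ^ 2 * F w ^ 2) μ := hF.const_mul _
  have i2 : Integrable (fun w => ∑ i ∈ I, c i * (F w * e i w)) μ :=
    integrable_finsetSum _ fun i hi => (hFe i hi).const_mul _
  have i3 : Integrable (fun w => ∑ i ∈ I, ∑ j ∈ I, c i * c j * (e i w * e j w)) μ :=
    integrable_finsetSum _ fun i hi => integrable_finsetSum _ fun j hj => (hee i hi j hj).const_mul _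
  have i12 : Integrable (fun w => v ^ 2 * F w ^ 2 - 2 * v * ∑ i ∈ I, c i * (F w * e i w)) μ :=
    i1.sub (i2.const_mul _)
  rw [integral_add i12 i3, integral_sub i1 (i2.const_mul _), integral_const_mul,
    integral_const_mul, integral_finsetSum _ fun i hi => (hFe i hi).const_mul _,
    integral_finsetSum _ fun i hi => integrable_finsetSum _ fun j hj => (hee i hi j hj).const_mul _] at h0
  have e3 : ∑ i ∈ I, ∫ w, ∑ j ∈ I, c i * c j * (e i w * e j w) ∂μ = v * ∑ i ∈ I, c i ^ 2 := by
    rw [Finset.mul_sum]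
    refine Finset.sum_congr rfl fun i hi => ?_
    rw [integral_finsetSum _ fun j hj => (hee i hi j hj).const_mul _]
    have : ∀ j ∈ I, ∫ w, c i * c j * (e i w * e j w) ∂μ = if i = j then v * c i ^ 2 else 0 := by
      intro j hj
      rw [integral_const_mul, ho i hi j hj]
      split_ifs with h
      · subst h; ring
      · simp
    rw [Finset.sum_congr rfl this, Finset.sum_ite_eq, if_pos hi]
  have e2 : ∑ i ∈ I, ∫ w, c i * (F w * e i w) ∂μ = ∑ i ∈ I, c i ^ 2 := by
    refine Finset.sum_congr rfl fun i hi => ?_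
    rw [integral_const_mul]; simp only [hc]; ring
  rw [e3, e2] at h0
  have : v * ∑ i ∈ I, c i ^ 2 ≤ v * (v * ∫ w, F w ^ 2 ∂μ) := by linarith
  exact le_of_mul_le_mul_left this hv

lemma gauss_sq (s : ℝ≥0) : ∫ u, u * u ∂gaussianReal 0 s = s := by
  have h := variance_fun_id_gaussianReal (μ := 0) (v := s)
  rw [variance_of_integral_eq_zero (by fun_prop) (by simpa using integral_id_gaussianReal)] at h
  simpa [sq] using h

lemma wmon_orth {n k : ℕ} (s : ℝ≥0) (S T : Finset (Fin n)) (hS : #S = k) :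
    ∫ w, wmon S w * wmon T w ∂wlaw n s = if S = T then (s:ℝ) ^ k else 0 := by
  have h : ∀ w : Fin n → ℝ, wmon S w * wmon T w
      = ∏ i, ((if i ∈ S then w i else 1) * (if i ∈ T then w i else 1)) := by
    intro w; rw [wmon, wmon, Finset.prod_mul_distrib]
  simp_rw [h]
  rw [wlaw, integral_fintype_prod_eq_prod (𝕜 := ℝ)
    (f := fun i u => ((if i ∈ S then u else 1) * (if i ∈ T then u else 1)))]
  split_ifs with hST
  · subst hST
    have : ∀ i : Fin n, ∫ u, ((if i ∈ S then u else 1) * (if i ∈ S then u else 1)) ∂gaussianReal 0 s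
        = if i ∈ S then (s:ℝ) else 1 := by
      intro i
      by_cases hi : i ∈ S <;> simp [hi, gauss_sq]
    simp_rw [this]
    simp [Finset.prod_ite_mem, hS]
  · obtain ⟨i, hi⟩ : ∃ i, ¬ (i ∈ S ↔ i ∈ T) := by
      by_contra hcon; push Not at hcon; exact hST (Finset.ext hcon)
    rw [Finset.prod_eq_zero (Finset.mem_univ i)]
    by_cases h1 : i ∈ S <;> by_cases h2 : i ∈ T <;> simp [h1, h2, integral_id_gaussianReal] at hi ⊢

/-- neuron correlation -/
def Fb (σ : ℝ → ℝ) (n : ℕ) (f : (Fin n → Bool) → ℝ) (w : Fin n → ℝ) (b : ℝ) : ℝ :=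
  bExp n fun x => f x * σ (∑ i, w i * bsign (x i) + b)

lemma abs_bsign (b : Bool) : |bsign b| = 1 := by cases b <;> simp [bsign]

lemma bool_abs {n : ℕ} {f : (Fin n → Bool) → ℝ} (hf : IsBooleanFn f) (x) : |f x| = 1 := by
  rcases hf x with h | h <;> simp [h]

lemma abs_Fb_le {σ : ℝ → ℝ} {A : ℝ} (hA0 : 0 ≤ A) (hA : ∀ u, |σ u| ≤ A * Real.exp |u|) {n : ℕ}
    {f : (Fin n → Bool) → ℝ} (hf : IsBooleanFn f) (w : Fin n → ℝ) (b : ℝ) :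
    |Fb σ n f w b| ≤ A * (Real.exp |b| * ∏ i, Real.exp |w i|) := by
  unfold Fb bExp
  rw [abs_div, abs_of_pos (by positivity : (0:ℝ) < 2 ^ n), div_le_iff₀ (by positivity)]
  refine (Finset.abs_sum_le_sum_abs _ _).trans ?_
  have : ∀ x ∈ (univ : Finset (Fin n → Bool)), |f x * σ (∑ i, w i * bsign (x i) + b)|
      ≤ A * (Real.exp |b| * ∏ i, Real.exp |w i|) := by
    intro x _
    rw [abs_mul, bool_abs hf, one_mul]
    have := abs_sig_le hA0 hA (fun i => w i * bsign (x i)) b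
    simpa [abs_mul, abs_bsign] using this
  refine (Finset.sum_le_sum this).trans ?_
  simp [mul_comm]

lemma measurable_Fb {σ : ℝ → ℝ} (hm : Measurable σ) (n : ℕ) (f : (Fin n → Bool) → ℝ) :
    Measurable (Function.uncurry (Fb σ n f)) := by
  unfold Fb bExp Function.uncurry
  refine Measurable.div_const (Finset.measurable_fun_sum _ fun x _ => ?_) _
  refine Measurable.const_mul (hm.comp ?_) _
  fun_prop

lemma measurable_Fb_left {σ : ℝ → ℝ} (hm : Measurable σ) (n : ℕ) (f : (Fin n → Bool) → ℝ) (b : ℝ) :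
    Measurable (fun w => Fb σ n f w b) := by
  unfold Fb bExp
  refine Measurable.div_const (Finset.measurable_fun_sum _ fun x _ => ?_) _
  refine Measurable.const_mul (hm.comp ?_) _
  fun_prop

lemma Fb_sq_le {σ : ℝ → ℝ} {A : ℝ} (hA0 : 0 ≤ A) (hA : ∀ u, |σ u| ≤ A * Real.exp |u|) {n : ℕ}
    {f : (Fin n → Bool) → ℝ} (hf : IsBooleanFn f) (w : Fin n → ℝ) (b : ℝ) :
    Fb σ n f w b ^ 2 ≤ A ^ 2 * ((∏ i, Real.exp (2 * |w i|)) * Real.exp (2 * |b|)) := by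
  have h := abs_Fb_le hA0 hA hf w b
  rw [← sq_abs]
  refine (pow_le_pow_left₀ (abs_nonneg _) h 2).trans (le_of_eq ?_)
  rw [← prod_exp_mul, two_mul, Real.exp_add]; ring

lemma integrable_Fb_sq {σ : ℝ → ℝ} (hm : Measurable σ) {A : ℝ} (hA0 : 0 ≤ A) (hA : ∀ u, |σ u| ≤ A * Real.exp |u|) {n : ℕ}
    {f : (Fin n → Bool) → ℝ} (hf : IsBooleanFn f) (s : ℝ≥0) (b : ℝ) :
    Integrable (fun w => Fb σ n f w b ^ 2) (wlaw n s) := by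
  refine Integrable.mono' (g := fun w => (A ^ 2 * Real.exp (2 * |b|)) * ∏ i, Real.exp (2 * |w i|))
    ((integrable_prod_exp n s 2).const_mul _) ?_ (Eventually.of_forall fun w => ?_)
  · have : Measurable fun w => Fb σ n f w b := measurable_Fb_left hm n f b
    exact (this.pow_const 2).aestronglyMeasurable
  · rw [Real.norm_of_nonneg (sq_nonneg _)]
    refine (Fb_sq_le hA0 hA hf w b).trans (le_of_eq (by ring))

lemma integrable_Fb_sq_prod {σ : ℝ → ℝ} (hm : Measurable σ) {A : ℝ} (hA0 : 0 ≤ A) (hA : ∀ u, |σ u| ≤ A * Real.exp |u|) {n : ℕ}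
    {f : (Fin n → Bool) → ℝ} (hf : IsBooleanFn f) (s : ℝ≥0) :
    Integrable (fun p : (Fin n → ℝ) × ℝ => Fb σ n f p.1 p.2 ^ 2) ((wlaw n s).prod (gaussianReal 0 s)) := by
  refine Integrable.mono' (((integrable_prod_exp n s 2).mul_prod (integrable_exp_abs s 2)).const_mul (A ^ 2))
    ((measurable_Fb hm n f).pow_const 2).aestronglyMeasurable (Eventually.of_forall fun w => ?_)
  rw [Real.norm_of_nonneg (sq_nonneg _)]
  exact Fb_sq_le hA0 hA hf w.1 w.2

lemma integrable_Fb_wmon {σ : ℝ → ℝ} (hm : Measurable σ) {A : ℝ} (hA0 : 0 ≤ A) (hA : ∀ u, |σ u| ≤ A * Real.exp |u|) {n : ℕ}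
    {f : (Fin n → Bool) → ℝ} (hf : IsBooleanFn f) (s : ℝ≥0) (b : ℝ) (S : Finset (Fin n)) :
    Integrable (fun w => Fb σ n f w b * wmon S w) (wlaw n s) := by
  refine Integrable.mono' (g := fun w => (A * Real.exp |b|) * ∏ i, Real.exp (2 * |w i|))
    ((integrable_prod_exp n s 2).const_mul _) ?_ (Eventually.of_forall fun w => ?_)
  · have : Measurable fun w => Fb σ n f w b := measurable_Fb_left hm n f b
    exact (this.mul (measurable_wmon S)).aestronglyMeasurable
  · rw [norm_mul, Real.norm_eq_abs, Real.norm_eq_abs, ← prod_exp_mul]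
    refine (mul_le_mul (abs_Fb_le hA0 hA hf w b) (abs_wmon_le S w) (abs_nonneg _) (by positivity)).trans
      (le_of_eq (by ring))

lemma integrable_wmon_wmon {n : ℕ} (s : ℝ≥0) (S T : Finset (Fin n)) :
    Integrable (fun w => wmon S w * wmon T w) (wlaw n s) := by
  refine Integrable.mono' (integrable_prod_exp n s 2)
    ((measurable_wmon S).mul (measurable_wmon T)).aestronglyMeasurable (Eventually.of_forall fun w => ?_)
  rw [norm_mul, Real.norm_eq_abs, Real.norm_eq_abs, ← prod_exp_mul]
  exact mul_le_mul (abs_wmon_le S w) (abs_wmon_le T w) (abs_nonneg _) (by positivity)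

lemma mp_flip {n : ℕ} (s : ℝ≥0) (x : Fin n → Bool) :
    MeasurePreserving (fun (w : Fin n → ℝ) i => w i * bsign (x i)) (wlaw n s) (wlaw n s) := by
  refine measurePreserving_pi (fun _ : Fin n => gaussianReal 0 s) (fun _ : Fin n => gaussianReal 0 s)
    (f := fun i u => u * bsign (x i)) fun i => ⟨by fun_prop, ?_⟩
  rw [gaussianReal_map_mul_const]
  congr 1
  · simp
  · cases x i <;> ext <;> simp [bsign]

lemma integral_flip {σ : ℝ → ℝ} (hm : Measurable σ) {n : ℕ} (s : ℝ≥0) (x : Fin n → Bool) (b : ℝ) (S : Finset (Fin n)) :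
    ∫ w, σ (∑ i, w i * bsign (x i) + b) * wmon S w ∂wlaw n s = chi S x * Pm σ n s S b := by
  have hw : ∀ w : Fin n → ℝ, wmon S w = chi S x * wmon S (fun i => w i * bsign (x i)) := by
    intro w
    rw [chi_eq, wmon, wmon, ← Finset.prod_mul_distrib]
    refine Finset.prod_congr rfl fun i _ => ?_
    split_ifs
    · linear_combination (-w i) * bsign_mul_self (x i)
    · simp
  have hmm : AEStronglyMeasurable (fun w : Fin n → ℝ => σ (∑ i, w i + b) * wmon S w) (wlaw n s) := by
    refine (Measurable.mul (hm.comp (by fun_prop)) (measurable_wmon S)).aestronglyMeasurable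
  unfold Pm
  rw [← (mp_flip s x).map_eq] at hmm
  have h2 := integral_map (mp_flip s x).measurable.aemeasurable hmm
  rw [(mp_flip s x).map_eq] at h2
  rw [h2, ← integral_const_mul]
  refine integral_congr_ae (Eventually.of_forall fun w => ?_)
  simp only
  rw [hw w]; ring

lemma integral_Fb_wmon {σ : ℝ → ℝ} (hm : Measurable σ) {A : ℝ} (hA0 : 0 ≤ A) (hA : ∀ u, |σ u| ≤ A * Real.exp |u|) {n : ℕ}
    {f : (Fin n → Bool) → ℝ} (s : ℝ≥0) (b : ℝ) (S : Finset (Fin n)) :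
    ∫ w, Fb σ n f w b * wmon S w ∂wlaw n s = fourierCoef n f S * Pm σ n s S b := by
  have hi : ∀ x ∈ (univ : Finset (Fin n → Bool)),
      Integrable (fun w => f x * (σ (∑ i, w i * bsign (x i) + b) * wmon S w)) (wlaw n s) := by
    intro x _
    refine Integrable.const_mul ?_ _
    refine Integrable.mono' (g := fun w => (A * Real.exp |b|) * ∏ i, Real.exp (2 * |w i|))
      ((integrable_prod_exp n s 2).const_mul _)
      (Measurable.mul (hm.comp (by fun_prop)) (measurable_wmon S)).aestronglyMeasurable
      (Eventually.of_forall fun w => ?_)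
    have := abs_sig_le hA0 hA (fun i => w i * bsign (x i)) b
    simp only [abs_mul, abs_bsign, mul_one] at this
    rw [norm_mul, Real.norm_eq_abs, Real.norm_eq_abs, ← prod_exp_mul]
    refine (mul_le_mul this (abs_wmon_le S w) (abs_nonneg _) (by positivity)).trans
      (le_of_eq (by ring))
  have he : ∀ w, Fb σ n f w b * wmon S w
      = (∑ x, f x * (σ (∑ i, w i * bsign (x i) + b) * wmon S w)) / 2 ^ n := by
    intro w
    rw [Fb, bExp, div_mul_eq_mul_div, Finset.sum_mul]
    simp_rw [mul_assoc]
  simp_rw [he]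
  rw [integral_div, integral_finsetSum _ hi, fourierCoef, bExp, div_mul_eq_mul_div, Finset.sum_mul]
  congr 1
  refine Finset.sum_congr rfl fun x _ => ?_
  rw [integral_const_mul, integral_flip hm]; ring

/-- Fourier weight at level k -/
def Wk (n k : ℕ) (f : (Fin n → Bool) → ℝ) : ℝ :=
  ∑ S ∈ Finset.univ.filter (fun S : Finset (Fin n) => #S = k), fourierCoef n f S ^ 2

lemma level_bound {σ : ℝ → ℝ} (hm : Measurable σ) {A : ℝ} (hA0 : 0 ≤ A) (hA : ∀ u, |σ u| ≤ A * Real.exp |u|) {n : ℕ}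
    (hn : n ≠ 0) {f : (Fin n → Bool) → ℝ} (hf : IsBooleanFn f) (k : ℕ) (b : ℝ) :
    Wk n k f * iteratedDeriv k (gsmooth σ 1) b ^ 2
      ≤ (n:ℝ) ^ k * ∫ w, Fb σ n f w b ^ 2 ∂wlaw n (n:ℝ≥0)⁻¹ := by
  have hn' : (0:ℝ) < n := by positivity
  have hp : ((n:ℝ)⁻¹ ^ k) * (n:ℝ) ^ k = 1 := by rw [← mul_pow, inv_mul_cancel₀ hn'.ne', one_pow]
  have hB := bessel (wlaw n (n:ℝ≥0)⁻¹) (Finset.univ.filter (fun S : Finset (Fin n) => #S = k))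
    (fun w => Fb σ n f w b) wmon (((n:ℝ)⁻¹) ^ k) (by positivity) (integrable_Fb_sq hm hA0 hA hf _ b)
    (fun S _ => integrable_Fb_wmon hm hA0 hA hf _ b S) (fun S _ T _ => integrable_wmon_wmon _ S T)
    (fun S hS T _ => by
      rw [wmon_orth _ S T (Finset.mem_filter.mp hS).2]; simp)
  have h2 : ∑ S ∈ Finset.univ.filter (fun S : Finset (Fin n) => #S = k),
      (∫ w, Fb σ n f w b * wmon S w ∂wlaw n (n:ℝ≥0)⁻¹) ^ 2
      = ((n:ℝ)⁻¹ ^ k) ^ 2 * (Wk n k f * iteratedDeriv k (gsmooth σ 1) b ^ 2) := by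
    rw [Wk, Finset.sum_mul, Finset.mul_sum]
    refine Finset.sum_congr rfl fun S hS => ?_
    have hk := (Finset.mem_filter.mp hS).2
    rw [integral_Fb_wmon hm hA0 hA, ← hk, iteratedDeriv_gsmooth hm hA0 hA n hn S]
    rw [← hk] at hp
    linear_combination (-(fourierCoef n f S ^ 2 * Pm σ n (n:ℝ≥0)⁻¹ S b ^ 2)) *
      (((n:ℝ)⁻¹ ^ #S) * (n:ℝ) ^ #S + 1) * hp
  rw [h2] at hB
  have := mul_le_mul_of_nonneg_left hB (by positivity : (0:ℝ) ≤ ((n:ℝ) ^ k) ^ 2)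
  calc _ = ((n:ℝ) ^ k) ^ 2 * (((n:ℝ)⁻¹ ^ k) ^ 2 * (Wk n k f * iteratedDeriv k (gsmooth σ 1) b ^ 2)) := by
        rw [← mul_assoc, ← mul_pow, mul_comm ((n:ℝ) ^ k), hp]; ring
    _ ≤ _ := this
    _ = (n:ℝ) ^ k * (((n:ℝ)⁻¹ ^ k) * (n:ℝ) ^ k) * ∫ w, Fb σ n f w b ^ 2 ∂wlaw n (n:ℝ≥0)⁻¹ := by ring
    _ = _ := by rw [hp]; ring
lemma local_bound (h : ℝ → ℝ) (d : ℝ) (hd : HasDerivAt h d 0) (hne : h 0 ≠ 0 ∨ d ≠ 0) :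
    ∃ c0 > 0, ∃ r > 0, ∀ b : ℝ, |b| ≤ r → c0 * b ^ 2 ≤ h b ^ 2 := by
  have key : ∃ c0 > 0, ∀ᶠ b in nhds (0:ℝ), c0 * b ^ 2 ≤ h b ^ 2 := by
    rcases eq_or_ne (h 0) 0 with h0 | h0
    · have hd0 : d ≠ 0 := by tauto
      refine ⟨d ^ 2 / 4, by positivity, ?_⟩
      have ho := hasDerivAt_iff_isLittleO.mp hd
      have := ho.bound (c := |d| / 2) (by positivity)
      filter_upwards [this] with b hb
      simp only [h0, sub_zero, smul_eq_mul, Real.norm_eq_abs] at hb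
      have h1 : |b * d| - |h b| ≤ |h b - b * d| := by
        rw [abs_sub_comm]; exact abs_sub_abs_le_abs_sub _ _
      rw [abs_mul] at h1
      have h2 : |d| / 2 * |b| ≤ |h b| := by linarith [mul_comm |d| |b|]
      have h3 := pow_le_pow_left₀ (by positivity) h2 2
      rw [sq_abs, mul_pow, div_pow, sq_abs, sq_abs] at h3
      linarith
    · refine ⟨h 0 ^ 2 / 2, by positivity, ?_⟩
      have hc : ContinuousAt (fun b => h b ^ 2 - h 0 ^ 2 / 2 * b ^ 2) 0 := by
        have := hd.continuousAt
        fun_prop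
      have : ∀ᶠ b in nhds (0:ℝ), 0 < h b ^ 2 - h 0 ^ 2 / 2 * b ^ 2 := by
        refine hc.eventually (lt_mem_nhds ?_)
        simp only [ne_eq, OfNat.ofNat_ne_zero, not_false_eq_true, zero_pow, mul_zero, sub_zero]
        positivity
      filter_upwards [this] with b hb
      linarith
  obtain ⟨c0, hc0, hev⟩ := key
  obtain ⟨r, hr, hb⟩ := Metric.eventually_nhds_iff.mp hev
  refine ⟨c0, hc0, r / 2, by positivity, fun b hbr => hb ?_⟩
  rw [dist_zero_right, Real.norm_eq_abs]; linarith

/-- truncated square -/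
def tsq (r b : ℝ) : ℝ := if |b| ≤ r then b ^ 2 else 0

lemma measurable_tsq (r : ℝ) : Measurable (tsq r) := by
  unfold tsq
  refine Measurable.ite ?_ (by fun_prop) (by fun_prop)
  exact measurableSet_le (by fun_prop) (by fun_prop)

lemma tsq_nonneg (r b : ℝ) : 0 ≤ tsq r b := by unfold tsq; split_ifs <;> positivity

lemma tsq_le (r b : ℝ) : tsq r b ≤ r ^ 2 := by
  unfold tsq; split_ifs with h
  · rw [← sq_abs b]; exact pow_le_pow_left₀ (abs_nonneg _) h 2
  · positivity

lemma integrable_tsq (r : ℝ) (μ : Measure ℝ) [IsProbabilityMeasure μ] : Integrable (tsq r) μ := by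
  refine Integrable.mono' (integrable_const (r ^ 2)) (measurable_tsq r).aestronglyMeasurable
    (Eventually.of_forall fun b => ?_)
  rw [Real.norm_of_nonneg (tsq_nonneg r b)]; exact tsq_le r b

lemma tsq_pos : 0 < ∫ z, tsq 1 z ∂gaussianReal 0 1 := by
  rw [integral_pos_iff_support_of_nonneg (fun b => tsq_nonneg 1 b) (integrable_tsq 1 _)]
  have hsub : Set.Ioc (0:ℝ) 1 ⊆ Function.support (tsq 1) := by
    intro z hz
    have : |z| ≤ 1 := by rw [abs_of_pos hz.1]; exact hz.2
    simp [tsq, this, hz.1.ne']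
  refine lt_of_lt_of_le ?_ (measure_mono hsub)
  rw [pos_iff_ne_zero]
  intro h0
  have := gaussianReal_absolutelyContinuous' 0 (one_ne_zero : (1:ℝ≥0) ≠ 0) h0
  simp at this

lemma tsq_scale (r : ℝ) (hr : 0 < r) (n : ℕ) (hn : n ≠ 0) (hnr : 1 ≤ r ^ 2 * n) :
    (∫ z, tsq 1 z ∂gaussianReal 0 1) / n ≤ ∫ b, tsq r b ∂gaussianReal 0 (n:ℝ≥0)⁻¹ := by
  have hn' : (0:ℝ) < n := by positivity
  have hmap : (gaussianReal 0 1).map (fun z => z / Real.sqrt n) = gaussianReal 0 (n:ℝ≥0)⁻¹ := by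
    rw [gaussianReal_map_div_const]
    congr 1
    · simp
    · ext; simp [Real.sq_sqrt hn'.le]
  rw [← hmap, integral_map (by fun_prop) (measurable_tsq r).aestronglyMeasurable, ← integral_div]
  refine integral_mono ((integrable_tsq 1 _).div_const _) ?_ fun z => ?_
  · refine Integrable.mono' (integrable_const (r ^ 2))
      ((measurable_tsq r).comp (by fun_prop)).aestronglyMeasurable (Eventually.of_forall fun b => ?_)
    rw [Real.norm_of_nonneg (tsq_nonneg r _)]; exact tsq_le r _
  · by_cases hz : |z| ≤ 1
    · have h1 : |z / Real.sqrt n| ≤ r := by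
        rw [abs_div, abs_of_nonneg (Real.sqrt_nonneg _), div_le_iff₀ (Real.sqrt_pos.mpr hn')]
        refine hz.trans ?_
        have : (1:ℝ) ≤ Real.sqrt (r ^ 2 * n) := by rw [Real.one_le_sqrt]; exact hnr
        rwa [Real.sqrt_mul (sq_nonneg r), Real.sqrt_sq hr.le] at this
      simp only [tsq, if_pos hz, if_pos h1]
      rw [div_pow, Real.sq_sqrt hn'.le]
    · have : tsq 1 z = 0 := by simp [tsq, hz]
      simp only [this, zero_div]
      exact tsq_nonneg _ _

lemma Wk_nonneg (n k : ℕ) (f : (Fin n → Bool) → ℝ) : 0 ≤ Wk n k f :=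
  Finset.sum_nonneg fun _ _ => sq_nonneg _

lemma Wk_le_one (n k : ℕ) (f : (Fin n → Bool) → ℝ) (hf : IsBooleanFn f) : Wk n k f ≤ 1 := by
  rw [← parseval f hf]
  exact Finset.sum_le_sum_of_subset_of_nonneg (Finset.filter_subset _ _) fun _ _ _ => sq_nonneg _

lemma INAL_eq {σ : ℝ → ℝ} (hm : Measurable σ) {A : ℝ} (hA0 : 0 ≤ A) (hA : ∀ u, |σ u| ≤ A * Real.exp |u|) {n : ℕ}
    {f : (Fin n → Bool) → ℝ} (hf : IsBooleanFn f) :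
    INAL n f σ = ∫ b, ∫ w, Fb σ n f w b ^ 2 ∂wlaw n (n:ℝ≥0)⁻¹ ∂gaussianReal 0 (n:ℝ≥0)⁻¹ :=
  integral_prod_symm _ (integrable_Fb_sq_prod hm hA0 hA hf _)

lemma Wk_le {σ : ℝ → ℝ} (hσ : Expressive σ) (k : ℕ) :
    ∃ C > 0, ∃ n0 : ℕ, 1 ≤ n0 ∧ ∀ n ≥ n0, ∀ f : (Fin n → Bool) → ℝ, IsBooleanFn f →
      Wk n k f ≤ C * (n:ℝ) ^ (k + 1) * INAL n f σ := by
  obtain ⟨hm, hpb, hne⟩ := hσ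
  obtain ⟨A, hA0, hA⟩ := polyBounded_exp hpb
  obtain ⟨c0, hc0, r, hr, hloc⟩ := local_bound _ _ (hasDerivAt_iter hm hA0.le hA k 0) (hne k)
  have hJ := tsq_pos
  set J := ∫ z, tsq 1 z ∂gaussianReal 0 1 with hJdef
  obtain ⟨m, hmr⟩ := exists_nat_ge (1 / r ^ 2)
  refine ⟨1 / (c0 * J), by positivity, max m 1, le_max_right _ _, fun n hn f hf => ?_⟩
  have hn1 : 1 ≤ n := (le_max_right _ _).trans hn
  have hn0 : n ≠ 0 := by omega
  have hn' : (0:ℝ) < n := by positivity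
  have hnr : 1 ≤ r ^ 2 * n := by
    have : (m:ℝ) ≤ n := by exact_mod_cast (le_max_left _ _).trans hn
    have h2 := hmr.trans this
    rw [div_le_iff₀ (by positivity)] at h2
    linarith
  have hsc := tsq_scale r hr n hn0 hnr
  have hI := INAL_eq hm hA0.le hA hf
  have hmono : ∫ b, Wk n k f * c0 * tsq r b ∂gaussianReal 0 (n:ℝ≥0)⁻¹
      ≤ ∫ b, (n:ℝ) ^ k * ∫ w, Fb σ n f w b ^ 2 ∂wlaw n (n:ℝ≥0)⁻¹ ∂gaussianReal 0 (n:ℝ≥0)⁻¹ := by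
    refine integral_mono ((integrable_tsq r _).const_mul _)
      ((integrable_Fb_sq_prod hm hA0.le hA hf _).integral_prod_right.const_mul _) fun b => ?_
    have hl := level_bound hm hA0.le hA hn0 hf k b
    refine le_trans ?_ hl
    rw [mul_assoc]
    refine mul_le_mul_of_nonneg_left ?_ (Wk_nonneg _ _ _)
    unfold tsq
    split_ifs with hb
    · exact hloc b hb
    · simpa using sq_nonneg _
  rw [integral_const_mul, integral_const_mul, ← hI] at hmono
  have h1 : Wk n k f * c0 * (J / n) ≤ (n:ℝ) ^ k * INAL n f σ :=
    (mul_le_mul_of_nonneg_left hsc (mul_nonneg (Wk_nonneg _ _ _) hc0.le)).trans hmono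
  have h2 : Wk n k f * (c0 * J) ≤ (n:ℝ) ^ (k + 1) * INAL n f σ := by
    have := mul_le_mul_of_nonneg_right h1 hn'.le
    calc _ = Wk n k f * c0 * (J / n) * n := by field_simp
      _ ≤ _ := this
      _ = _ := by ring
  calc Wk n k f ≤ ((n:ℝ) ^ (k + 1) * INAL n f σ) / (c0 * J) := by
        rw [le_div_iff₀ (by positivity)]; exact h2
    _ = _ := by ring
lemma orbitCP_levels {n N : ℕ} (hnN : n ≤ N) (f : (Fin n → Bool) → ℝ) (hf : IsBooleanFn f) (K : ℕ) :
    orbitCP N (extendFn n N f) ≤ ∑ k ∈ range K, Wk n k f * ((n:ℝ) / N) ^ k + ((n:ℝ) / N) ^ K := by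
  refine (orbitCP_le hnN f hf).trans ?_
  set q := (n:ℝ) / N with hq
  have hq0 : 0 ≤ q := by positivity
  have hq1 : q ≤ 1 := div_le_one_of_le₀ (by exact_mod_cast hnN) (by positivity)
  have hpt : ∀ S : Finset (Fin n), q ^ #S ≤ ∑ k ∈ range K, (if #S = k then q ^ k else 0) + q ^ K := by
    intro S
    rw [Finset.sum_ite_eq]
    split_ifs with h
    · have := pow_nonneg hq0 K; linarith
    · rw [zero_add]
      exact pow_le_pow_of_le_one hq0 hq1 (by simpa using h)
  calc _ ≤ ∑ S, fourierCoef n f S ^ 2 * (∑ k ∈ range K, (if #S = k then q ^ k else 0) + q ^ K) :=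
        Finset.sum_le_sum fun S _ => mul_le_mul_of_nonneg_left (hpt S) (sq_nonneg _)
    _ = _ := by
        simp_rw [mul_add, Finset.sum_add_distrib, ← Finset.sum_mul, parseval f hf, one_mul]
        congr 1
        simp_rw [Finset.mul_sum]
        rw [Finset.sum_comm]
        refine Finset.sum_congr rfl fun k _ => ?_
        rw [Wk, Finset.sum_mul, Finset.sum_filter]
        refine Finset.sum_congr rfl fun S _ => ?_
        split_ifs <;> simp

lemma orbitCP_nonneg (N : ℕ) (f : (Fin N → Bool) → ℝ) : 0 ≤ orbitCP N f := by
  unfold orbitCP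
  refine div_nonneg ?_ (by positivity)
  exact Finset.sum_nonneg fun _ _ => Finset.sum_nonneg fun _ _ => sq_nonneg _

lemma ratio_le {ε : ℝ} {n : ℕ} (hn : 1 ≤ n) : (n:ℝ) / Ndim ε n ≤ (n:ℝ) ^ (-ε) := by
  have hn' : (0:ℝ) < n := by exact_mod_cast hn
  have hN : (n:ℝ) ^ (1 + ε) ≤ Ndim ε n := Nat.le_ceil _
  have hp : (0:ℝ) < (n:ℝ) ^ (1 + ε) := Real.rpow_pos_of_pos hn' _
  calc (n:ℝ) / Ndim ε n ≤ n / (n:ℝ) ^ (1 + ε) := div_le_div_of_nonneg_left hn'.le hp hN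
    _ = _ := by
      rw [Real.rpow_add hn', Real.rpow_one, Real.rpow_neg hn'.le]
      field_simp

lemma ratio_pow_le {ε : ℝ} {n : ℕ} (hn : 1 ≤ n) (k : ℕ) :
    ((n:ℝ) / Ndim ε n) ^ k ≤ (n:ℝ) ^ (-ε * k) := by
  rw [Real.rpow_mul (by positivity), Real.rpow_natCast]
  exact pow_le_pow_left₀ (by positivity) (ratio_le hn) k

lemma n_le_Ndim {ε : ℝ} (hε : 0 < ε) {n : ℕ} (hn : 1 ≤ n) : n ≤ Ndim ε n := by
  have h1 : (1:ℝ) ≤ n := by exact_mod_cast hn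
  have : (n:ℝ) ≤ (n:ℝ) ^ (1 + ε) := by
    conv_lhs => rw [← Real.rpow_one (n:ℝ)]
    exact Real.rpow_le_rpow_of_exponent_le h1 (by linarith)
  exact_mod_cast this.trans (Nat.le_ceil _)

/-- If `σ` is expressive and `INAL(f_n, σ) = O(n^{-c})`, then for every
`ε > 0`, with `N = n^{1+ε}`, `CP(orb(f̄_n), U^N) = O(n^{-(ε/(1+ε))(c-1)})`. -/
theorem inal_bigO_implies_orbitCP_bigO
    (σ : ℝ → ℝ) (hσ : Expressive σ)
    (f : ∀ n : ℕ, (Fin n → Bool) → ℝ) (hf : ∀ n, IsBooleanFn (f n))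
    (ε : ℝ) (hε : 0 < ε) (c : ℝ)
    (hINAL : (fun n : ℕ => INAL n (f n) σ) =O[atTop] fun n : ℕ => (n : ℝ) ^ (-c)) :
    (fun n : ℕ => orbitCP (Ndim ε n) (extendFn n (Ndim ε n) (f n))) =O[atTop]
      fun n : ℕ => (n : ℝ) ^ (-(ε / (1 + ε)) * (c - 1)) := by
  set θ := ε / (1 + ε) with hθ
  have hθ0 : 0 < θ := by positivity
  have hθ1 : θ ≤ 1 := by rw [hθ, div_le_one (by positivity)]; linarith
  have hθε : θ ≤ ε := div_le_self hε.le (by linarith)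
  obtain ⟨K, hK⟩ := exists_nat_ge (θ * (c - 1) / ε)
  rw [div_le_iff₀ hε] at hK
  obtain ⟨D, hD0, hD⟩ := hINAL.exists_pos
  have hDb := hD.bound
  have hterm : ∀ k, (fun n : ℕ => Wk n k (f n) * ((n:ℝ) / Ndim ε n) ^ k) =O[atTop]
      fun n : ℕ => (n : ℝ) ^ (-θ * (c - 1)) := by
    intro k
    obtain ⟨C, hC, n0, hn0, hW⟩ := Wk_le hσ k
    refine IsBigO.of_bound ((C * D) ^ θ) ?_
    filter_upwards [hDb, eventually_ge_atTop n0] with n hn hnn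
    have hn1 : 1 ≤ n := hn0.trans hnn
    have hn' : (0:ℝ) < n := by exact_mod_cast hn1
    have hn1' : (1:ℝ) ≤ n := by exact_mod_cast hn1
    have hW0 := Wk_nonneg n k (f n)
    rw [Real.norm_of_nonneg (by positivity), Real.norm_of_nonneg (by positivity)]
    rw [Real.norm_of_nonneg (by positivity : (0:ℝ) ≤ (n:ℝ) ^ (-c))] at hn
    have h1 : Wk n k (f n) ≤ C * D * (n:ℝ) ^ ((k:ℝ) + 1 - c) := by
      calc _ ≤ C * (n:ℝ) ^ (k + 1) * INAL n (f n) σ := hW n hnn (f n) (hf n)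
        _ ≤ C * (n:ℝ) ^ (k + 1) * (D * (n:ℝ) ^ (-c)) :=
          mul_le_mul_of_nonneg_left ((le_abs_self _).trans hn) (by positivity)
        _ = C * D * ((n:ℝ) ^ (k + 1) * (n:ℝ) ^ (-c)) := by ring
        _ = _ := by
          rw [← Real.rpow_natCast, ← Real.rpow_add hn']; push_cast; ring_nf
    have h2 : Wk n k (f n) ≤ (C * D) ^ θ * (n:ℝ) ^ (((k:ℝ) + 1 - c) * θ) := by
      calc _ ≤ Wk n k (f n) ^ θ := Real.self_le_rpow_of_le_one hW0 (Wk_le_one n k _ (hf n)) hθ1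
        _ ≤ (C * D * (n:ℝ) ^ ((k:ℝ) + 1 - c)) ^ θ := Real.rpow_le_rpow hW0 h1 hθ0.le
        _ = _ := by rw [Real.mul_rpow (by positivity) (by positivity), Real.rpow_mul hn'.le]
    calc _ ≤ ((C * D) ^ θ * (n:ℝ) ^ (((k:ℝ) + 1 - c) * θ)) * (n:ℝ) ^ (-ε * k) :=
          mul_le_mul h2 (ratio_pow_le hn1 k) (by positivity) (by positivity)
      _ = (C * D) ^ θ * (n:ℝ) ^ (((k:ℝ) + 1 - c) * θ + -ε * k) := by
          rw [mul_assoc, ← Real.rpow_add hn']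
      _ ≤ _ := by
          refine mul_le_mul_of_nonneg_left (Real.rpow_le_rpow_of_exponent_le hn1' ?_) (by positivity)
          nlinarith [mul_le_mul_of_nonneg_right hθε (Nat.cast_nonneg k : (0:ℝ) ≤ k)]
  have hlast : (fun n : ℕ => ((n:ℝ) / Ndim ε n) ^ K) =O[atTop]
      fun n : ℕ => (n : ℝ) ^ (-θ * (c - 1)) := by
    refine IsBigO.of_bound 1 ?_
    filter_upwards [eventually_ge_atTop 1] with n hn1
    have hn1' : (1:ℝ) ≤ n := by exact_mod_cast hn1
    rw [Real.norm_of_nonneg (by positivity), Real.norm_of_nonneg (by positivity), one_mul]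
    refine (ratio_pow_le hn1 K).trans (Real.rpow_le_rpow_of_exponent_le hn1' ?_)
    linarith
  have hsum := (IsBigO.sum (A := fun k n => Wk n k (f n) * ((n:ℝ) / Ndim ε n) ^ k)
    (s := range K) fun k _ => hterm k).add hlast
  refine IsBigO.trans (IsBigO.of_bound 1 ?_) hsum
  filter_upwards [eventually_ge_atTop 1] with n hn1
  rw [Real.norm_of_nonneg (orbitCP_nonneg _ _), one_mul, Finset.sum_apply]
  exact (orbitCP_levels (n_le_Ndim hε hn1) (f n) (hf n) K).trans (le_abs_self _)
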